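/- arXiv:1808.09627 — 3 statements merged into one kernel-verified Lean document; each statement's English description precedes it below -/
import Mathlib

section
/- Let n, k be natural numbers with k + 1 ≤ n, and let φ₁, …, φ_k : ℝⁿ → ℝ be C^∞ functions. Then for every strictly increasing map m : Fin (k+1) → Fin n and every point z ∈ ℝⁿ, the alternating sum over p ∈ Fin (k+1) of (−1)^p times the partial derivative in the direction e_{m(p)} of the Jacobian minor det(∂φ_i/∂z_{m(succAbove p q)})_{i,q ∈ Fin k} vanishes: ∑_{p=0}^{k} (−1)^p ∂_{m(p)} [ det( ∂φ_i/∂z_{m(p.succAbove q)} ) ] (z) = 0. (This is the coefficient form of the paper's Basic Calculus Lemma: the (k+1)-form ∑_{(s,J)} ∂_s(∂(φ₁,…,φ_k)/∂(z_{j₁},…,z_{j_k})) dz_s ∧ dz_{j₁} ∧ ⋯ ∧ dz_{j_k} is identically zero.) -/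
/-!
The alternating sum is the value at `(e_{m 0}, …, e_{m k})` of the exterior derivative of
`dφ₁ ∧ ⋯ ∧ dφ_k`, and this form is the pullback of the constant volume form on `ℝᵏ` under
`Φ = (φ₁, …, φ_k)`. Since the exterior derivative commutes with pullback
(`extDeriv_pullback`) and vanishes on constant forms, the sum is zero. The coefficients are
read off with `extDeriv_apply`.
-/

/-- The determinant, as a constant continuous alternating `k`-form on `ℝᵏ`; its arguments are
the rows of the matrix. -/
noncomputable def volumeForm (k : ℕ) : (Fin k → ℝ) [⋀^Fin k]→L[ℝ] ℝ :=
  { (Matrix.detRowAlternating : (Fin k → ℝ) [⋀^Fin k]→ₗ[ℝ] ℝ) with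
    cont := by
      change Continuous fun v : Fin k → Fin k → ℝ => Matrix.det (Matrix.of v)
      exact Continuous.matrix_det (by fun_prop) }

lemma volumeForm_apply (k : ℕ) (v : Fin k → Fin k → ℝ) :
    volumeForm k v = Matrix.det (Matrix.of v) := rfl

/-- **Basic Calculus Lemma (coefficient form).**
For `C^∞` functions `φ₁, …, φ_k : ℝⁿ → ℝ` and any strictly increasing
`m : Fin (k+1) → Fin n`, the alternating sum over `p` of `(-1)^p` times the
partial derivative in direction `e_{m p}` of the Jacobian minor
`det (∂φ_i/∂z_{m (p.succAbove q)})` vanishes at every point `z`. -/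
theorem basic_calculus_lemma_coefficients
    (n k : ℕ) (hk : k + 1 ≤ n)
    (φ : Fin k → (Fin n → ℝ) → ℝ) (hφ : ∀ i, ContDiff ℝ (⊤ : ℕ∞) (φ i))
    (m : Fin (k + 1) → Fin n) (hm : StrictMono m) (z : Fin n → ℝ) :
    ∑ p : Fin (k + 1), (-1 : ℝ) ^ (p : ℕ) *
      fderiv ℝ
        (fun x => Matrix.det
          (Matrix.of fun i q : Fin k =>
            fderiv ℝ (φ i) x (Pi.single (m (p.succAbove q)) 1)))
        z (Pi.single (m p) 1) = 0 := by
  let Φ : (Fin n → ℝ) → (Fin k → ℝ) := fun x i => φ i x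
  have hΦ : ContDiff ℝ (⊤ : ℕ∞) Φ := contDiff_pi.2 hφ
  have hΦ' : DifferentiableAt ℝ (fderiv ℝ Φ) z :=
    (hΦ.fderiv_right (m := 1) (by norm_cast)).differentiable (by norm_num) z
  have hdiff : DifferentiableAt ℝ
      (fun x => (volumeForm k).compContinuousLinearMap (fderiv ℝ Φ x)) z :=
    (differentiableAt_const (volumeForm k)).continuousAlternatingMapCompContinuousLinearMap hΦ'
  have hclosed : extDeriv
      (fun x => (volumeForm k).compContinuousLinearMap (fderiv ℝ Φ x)) z = 0 := by
    have h := extDeriv_pullback (ω := fun _ => volumeForm k)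
      (differentiableAt_const _) (hΦ.contDiffAt (x := z)) (by
        rw [minSmoothness_of_isRCLikeNormedField]
        exact WithTop.coe_le_coe.2 (le_top : (2 : ℕ∞) ≤ ⊤))
    have hconst : extDeriv (fun _ : Fin k → ℝ => volumeForm k) (Φ z) = 0 := by
      ext v
      simp [extDeriv, ContinuousAlternatingMap.alternatizeUncurryFin_apply]
    rw [h, hconst]
    rfl
  have happly := extDeriv_apply hdiff fun p => Pi.single (m p) (1 : ℝ)
  rw [hclosed] at happly
  -- The minors have the index `i` on rows, while the arguments of the form give the columns.
  have hminor : ∀ (p : Fin (k + 1)) (x : Fin n → ℝ),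
      (volumeForm k).compContinuousLinearMap (fderiv ℝ Φ x)
        (p.removeNth (α := fun _ => Fin n → ℝ) fun p => Pi.single (m p) (1 : ℝ)) =
      Matrix.det (Matrix.of fun i q : Fin k =>
        fderiv ℝ (φ i) x (Pi.single (m (p.succAbove q)) 1)) := by
    intro p x
    rw [← Matrix.det_transpose, ContinuousAlternatingMap.compContinuousLinearMap_apply,
      volumeForm_apply]
    congr 1
    ext q i
    have hpi := fderiv_pi (𝕜 := ℝ) (φ := φ) (x := x)
      fun i => (hφ i).differentiable (by simp) x
    change fderiv ℝ (fun x i => φ i x) x (Pi.single (m (p.succAbove q)) 1) i = _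
    rw [hpi]
    rfl
  simp only [hminor] at happly
  simpa using happly.symm
end

section
/- Let n, k be natural numbers and let φ₁, …, φ_k : ℝⁿ → ℝ be C^∞ functions. Define the k-form ω : ℝⁿ → AlternatingMap ℝ ℝⁿ ℝ (Fin k) by ω(z)(v₁, …, v_k) = det( (fderiv ℝ φ_i z)(v_q) )_{i,q ∈ Fin k} (that is, ω = dφ₁ ∧ ⋯ ∧ dφ_k). Then the exterior derivative of ω vanishes identically: for every z ∈ ℝⁿ and all vectors v₀, …, v_k ∈ ℝⁿ, ∑_{p=0}^{k} (−1)^p (fderiv ℝ ω z (v_p))(v₀, …, v̂_p, …, v_k) = 0, where v̂_p means v_p is omitted. -/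
/-!
The form `dφ₁ ∧ ⋯ ∧ dφ_k` is the pullback under `Φ = (φ₁, …, φ_k) : ℝⁿ → ℝᵏ` of the constant
volume form `det` on `ℝᵏ`. The exterior derivative commutes with pullback (`extDeriv_pullback`) and
kills constant forms, so `dω = Φ^* (d det) = 0`. What remains is to pass between `ω`, which takes
values in continuous multilinear maps, and the pulled-back form, which takes values in continuous
alternating maps: the two differ by a continuous linear inclusion, which commutes with `fderiv`.
-/

/-- The determinant, as a continuous alternating `k`-form on `ℝᵏ` (vectors are rows). -/
noncomputable def detForm (k : ℕ) : (Fin k → ℝ) [⋀^Fin k]→L[ℝ] ℝ :=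
  { (Matrix.detRowAlternating : (Fin k → ℝ) [⋀^Fin k]→ₗ[ℝ] ℝ) with
    cont := by
      change Continuous fun M : Matrix (Fin k) (Fin k) ℝ => M.det
      exact Continuous.matrix_det continuous_id }

/-- **Basic Calculus Lemma (form version).**
If `φ₁, …, φ_k : ℝⁿ → ℝ` are `C^∞` and `ω = dφ₁ ∧ ⋯ ∧ dφ_k`, i.e. `ω` is the
(alternating) `k`-form with `ω z (v₁, …, v_k) = det ((fderiv ℝ (φ i) z) (v q))`,
then the exterior derivative of `ω` vanishes identically:
`∑ p, (-1)^p • (fderiv ℝ ω z (v p)) (v₀, …, v̂_p, …, v_k) = 0`. -/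
theorem wedge_of_differentials_is_closed
    (n k : ℕ)
    (φ : Fin k → (Fin n → ℝ) → ℝ) (hφ : ∀ i, ContDiff ℝ (⊤ : ℕ∞) (φ i))
    (ω : (Fin n → ℝ) → ((Fin n → ℝ) [×k]→L[ℝ] ℝ))
    (hω : ∀ (z : Fin n → ℝ) (v : Fin k → Fin n → ℝ),
      ω z v = Matrix.det (Matrix.of fun i q : Fin k => fderiv ℝ (φ i) z (v q)))
    (z : Fin n → ℝ) (v : Fin (k + 1) → Fin n → ℝ) :
    ∑ p : Fin (k + 1), (-1 : ℝ) ^ (p : ℕ) *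
      fderiv ℝ ω z (v p) (v ∘ p.succAbove) = 0 := by
  set Φ : (Fin n → ℝ) → (Fin k → ℝ) := fun x i => φ i x
  have hΦ : ContDiff ℝ (⊤ : ℕ∞) Φ := contDiff_pi.2 hφ
  have h2 : (2 : WithTop ℕ∞) ≤ ((⊤ : ℕ∞) : WithTop ℕ∞) :=
    WithTop.coe_le_coe.2 (le_top : (2 : ℕ∞) ≤ ⊤)
  have hΦ' (x : Fin n → ℝ) (u : Fin n → ℝ) (i : Fin k) :
      fderiv ℝ Φ x u i = fderiv ℝ (φ i) x u := by
    rw [fderiv_pi fun i => ((hφ i).differentiable (by simp)).differentiableAt]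
    rfl
  set η : (Fin n → ℝ) → (Fin n → ℝ) [⋀^Fin k]→L[ℝ] ℝ :=
    fun x => (detForm k).compContinuousLinearMap (fderiv ℝ Φ x) with hη
  have hωη : ω = fun x =>
      ContinuousAlternatingMap.toContinuousMultilinearMapCLM ℝ (η x) := by
    funext x
    ext u
    -- `hω` puts the vectors in columns, `detForm` in rows
    rw [hω, ← Matrix.det_transpose]
    change _ = Matrix.det (Matrix.of fun q i => fderiv ℝ Φ x (u q) i)
    simp only [hΦ']
    rfl
  have hdη : DifferentiableAt ℝ η z :=
    (differentiableAt_const _).continuousAlternatingMapCompContinuousLinearMap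
      ((hΦ.fderiv_right (m := 1)
        (by rw [one_add_one_eq_two]; exact h2)).differentiable
          one_ne_zero).differentiableAt
  have hclosed : extDeriv η z = 0 := by
    have := extDeriv_pullback (ω := fun _ => detForm k) (f := Φ) (x := z) (r := (⊤ : ℕ∞))
      (differentiableAt_const _) hΦ.contDiffAt
      (by simpa using h2)
    rw [hη, this]
    ext w
    simp [extDeriv, ContinuousAlternatingMap.alternatizeUncurryFin_apply]
  have hsum : extDeriv η z v = 0 := by rw [hclosed]; rfl
  rw [extDeriv, ContinuousAlternatingMap.alternatizeUncurryFin_apply] at hsum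
  have hfd (u : Fin n → ℝ) (w : Fin k → Fin n → ℝ) : fderiv ℝ ω z u w = fderiv ℝ η z u w := by
    rw [hωη]
    erw [((ContinuousAlternatingMap.toContinuousMultilinearMapCLM ℝ).hasFDerivAt.comp z
      hdη.hasFDerivAt).fderiv]
    rfl
  simp only [hfd]
  simpa +unfoldPartialApp [Fin.removeNth, Function.comp_def] using hsum
end

section
/- Let n, k be natural numbers, let U be an open subset of ℝⁿ, let F : ℝⁿ → ℝⁿ be C^∞ on U, and let ω : ℝⁿ → AlternatingMap ℝ ℝⁿ ℝ (Fin k) be C^∞ on a neighborhood of F(U). Define the pullback F*ω : ℝⁿ → AlternatingMap ℝ ℝⁿ ℝ (Fin k) by (F*ω)(x)(v₁, …, v_k) = ω(F x)((fderiv ℝ F x) v₁, …, (fderiv ℝ F x) v_k), and define the exterior derivative of a C^∞ form η by dη(x)(v₀,…,v_m) = ∑_{p} (−1)^p (fderiv ℝ η x (v_p))(v₀,…,v̂_p,…,v_m). Then for every x ∈ U and all v₀, …, v_k ∈ ℝⁿ, d(F*ω)(x)(v₀, …, v_k) = dω(F x)((fderiv ℝ F x) v₀, …, (fderiv ℝ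 F x) v_k); that is, d(F*ω) = F*(dω) on U. -/
/-!
The second-derivative terms of `F` cancel in `d(F*ω)` because the second derivative is symmetric
while `ω` is alternating; for Mathlib's bundled differential forms this is `extDeriv_pullback`.
The forms here are instead families of continuous multilinear maps that happen to be alternating.
They are repackaged as continuous alternating maps, which preserves differentiability because the
inclusion of alternating maps into multilinear maps has a continuous linear left inverse
(all spaces are finite-dimensional), and the alternating sum of the statement is then `extDeriv`.
-/

/-- Differentiability of a family of alternating maps may be tested on the underlying multilinear
maps: on finite-dimensional spaces, the inclusion has a continuous linear left inverse. -/
lemma differentiableAt_alternating_of_multilinear {n k : ℕ}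
    {Ω : (Fin n → ℝ) → (Fin n → ℝ) [⋀^Fin k]→L[ℝ] ℝ} {y : Fin n → ℝ}
    (h : DifferentiableAt ℝ (fun z => (Ω z).toContinuousMultilinearMap) y) :
    DifferentiableAt ℝ Ω y := by
  have : FiniteDimensional ℝ ((Fin n → ℝ) [×k]→L[ℝ] ℝ) :=
    FiniteDimensional.of_injective
      (ContinuousMultilinearMap.toMultilinearMapLinear : ((Fin n → ℝ) [×k]→L[ℝ] ℝ) →ₗ[ℝ]
        MultilinearMap ℝ (fun _ : Fin k => Fin n → ℝ) ℝ)
      ContinuousMultilinearMap.toMultilinearMap_injective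
  obtain ⟨g, hg⟩ := LinearMap.exists_leftInverse_of_injective
    (ContinuousAlternatingMap.toContinuousMultilinearMapCLM ℝ :
      ((Fin n → ℝ) [⋀^Fin k]→L[ℝ] ℝ) →L[ℝ] _).toLinearMap
    (LinearMap.ker_eq_bot.2 ContinuousAlternatingMap.toContinuousMultilinearMap_injective)
  have hcomp : Ω = fun z => g.toContinuousLinearMap (Ω z).toContinuousMultilinearMap :=
    funext fun z => (LinearMap.congr_fun hg (Ω z)).symm
  rw [hcomp]
  exact g.toContinuousLinearMap.differentiableAt.comp y h

/-- `extDeriv` as an alternating sum of values of the derivative of the underlying multilinear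
form. -/
lemma extDeriv_eq_sum_multilinear {n k : ℕ}
    {Ω : (Fin n → ℝ) → (Fin n → ℝ) [⋀^Fin k]→L[ℝ] ℝ} {y : Fin n → ℝ}
    (h : DifferentiableAt ℝ Ω y) (v : Fin (k + 1) → Fin n → ℝ) :
    extDeriv Ω y v = ∑ p : Fin (k + 1), (-1 : ℝ) ^ (p : ℕ) *
      fderiv ℝ (fun z => (Ω z).toContinuousMultilinearMap) y (v p) (v ∘ p.succAbove) := by
  have hd : fderiv ℝ (fun z => (Ω z).toContinuousMultilinearMap) y =
      (ContinuousAlternatingMap.toContinuousMultilinearMapCLM ℝ).comp (fderiv ℝ Ω y) :=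
    ((ContinuousAlternatingMap.toContinuousMultilinearMapCLM ℝ :
      ((Fin n → ℝ) [⋀^Fin k]→L[ℝ] ℝ) →L[ℝ] _).hasFDerivAt.comp y
      h.hasFDerivAt).fderiv
  rw [hd, extDeriv, ContinuousAlternatingMap.alternatizeUncurryFin_apply]
  refine Finset.sum_congr rfl fun p _ => ?_
  rw [← Int.cast_smul_eq_zsmul ℝ]
  simp [Function.comp_def]
  rfl

/-- **Naturality of the exterior derivative under smooth coordinate changes**
(the chart-level content of the paper's Theorem).  Let `U ⊆ ℝⁿ` be open, let
`F : ℝⁿ → ℝⁿ` be `C^∞` on `U`, and let `ω` be a `k`-form (an alternating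
`k`-multilinear-map-valued function) which is `C^∞` on an open neighborhood `V`
of `F '' U`.  If `F*ω` denotes the pullback,
`(F*ω) x (v₁,…,v_k) = ω (F x) (dF_x v₁, …, dF_x v_k)`, then for every `x ∈ U`
and all `v₀, …, v_k`,
`d(F*ω)(x)(v₀,…,v_k) = dω(F x)(dF_x v₀, …, dF_x v_k)`, where
`dη(x)(v₀,…,v_m) = ∑ p, (-1)^p (fderiv ℝ η x (v p))(v₀,…,v̂_p,…,v_m)`. -/
theorem exterior_derivative_commutes_with_pullback
    (n k : ℕ) (U : Set (Fin n → ℝ)) (hU : IsOpen U)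
    (F : (Fin n → ℝ) → (Fin n → ℝ)) (hF : ContDiffOn ℝ (⊤ : ℕ∞) F U)
    (ω : (Fin n → ℝ) → ((Fin n → ℝ) [×k]→L[ℝ] ℝ))
    (halt : ∀ (x : Fin n → ℝ) (v : Fin k → Fin n → ℝ) (i j : Fin k),
      i ≠ j → v i = v j → ω x v = 0)
    (V : Set (Fin n → ℝ)) (hV : IsOpen V) (hFUV : F '' U ⊆ V)
    (hω : ContDiffOn ℝ (⊤ : ℕ∞) ω V)
    (Fω : (Fin n → ℝ) → ((Fin n → ℝ) [×k]→L[ℝ] ℝ))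
    (hFω : ∀ (x : Fin n → ℝ) (v : Fin k → Fin n → ℝ),
      Fω x v = ω (F x) fun q => fderiv ℝ F x (v q))
    (x : Fin n → ℝ) (hx : x ∈ U) (v : Fin (k + 1) → Fin n → ℝ) :
    ∑ p : Fin (k + 1), (-1 : ℝ) ^ (p : ℕ) *
        fderiv ℝ Fω x (v p) (v ∘ p.succAbove) =
      ∑ p : Fin (k + 1), (-1 : ℝ) ^ (p : ℕ) *
        fderiv ℝ ω (F x) (fderiv ℝ F x (v p))
          (fun q => fderiv ℝ F x (v (p.succAbove q))) := by
  let Ω : (Fin n → ℝ) → (Fin n → ℝ) [⋀^Fin k]→L[ℝ] ℝ := fun y =>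
    { ω y with map_eq_zero_of_eq' := fun w i j hw hij => halt y w i j hij hw }
  have hΩ : (fun y => (Ω y).toContinuousMultilinearMap) = ω := rfl
  have hFx : ContDiffAt ℝ (⊤ : ℕ∞) F x := hF.contDiffAt (hU.mem_nhds hx)
  have hωd : DifferentiableAt ℝ ω (F x) :=
    (hω.contDiffAt (hV.mem_nhds (hFUV ⟨x, hx, rfl⟩))).differentiableAt (by simp)
  have hΩd : DifferentiableAt ℝ Ω (F x) := differentiableAt_alternating_of_multilinear hωd
  have hpull : (fun y => ((Ω (F y)).compContinuousLinearMap
      (fderiv ℝ F y)).toContinuousMultilinearMap) = Fω := by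
    ext y w
    exact (hFω y w).symm
  have hdF : DifferentiableAt ℝ (fderiv ℝ F) x :=
    (hFx.fderiv_right (m := 1) (by norm_cast)).differentiableAt one_ne_zero
  have hpulld : DifferentiableAt ℝ
      (fun y => (Ω (F y)).compContinuousLinearMap (fderiv ℝ F y)) x :=
    (HasFDerivAt.continuousAlternatingMapCompContinuousLinearMap
      (hΩd.comp x (hFx.differentiableAt (by simp))).hasFDerivAt
      hdF.hasFDerivAt).differentiableAt
  have key := DFunLike.congr_fun
    (extDeriv_pullback (r := ((⊤ : ℕ∞) : WithTop ℕ∞)) hΩd hFx (by simp; norm_cast)) v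
  rw [extDeriv_eq_sum_multilinear hpulld, hpull,
    ContinuousAlternatingMap.compContinuousLinearMap_apply,
    extDeriv_eq_sum_multilinear hΩd, hΩ] at key
  exact key
end
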